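/- arXiv:2410.02909 — 2 statements merged into one kernel-verified Lean document; each statement's English description precedes it below -/
import Mathlib

section
/- In the setting of the Carathéodory existence lemma, the Picard operator Φ on X = {η ∈ C([a,b],E) : η(t₀) = y₀, ‖η − y₀‖_∞ ≤ R} is a contraction with Lipschitz constant L·‖γ‖_{L¹}: for all η, ζ ∈ X, ‖Φ(η) − Φ(ζ)‖_∞ ≤ L‖γ‖_{L¹}‖η − ζ‖_∞. -/
open Set MeasureTheory

theorem lipschitzOnWith_of_norm_sub_le_mul_norm {X Z E : Type*} [SeminormedAddCommGroup X]
    [SeminormedAddCommGroup Z] [SeminormedAddCommGroup E] {f : X → Z → E} {D : Set X} {L : NNReal}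
    (hf : ∀ y₁ ∈ D, ∀ y₂ ∈ D, ∀ z, ‖f y₂ z - f y₁ z‖ ≤ L * ‖y₂ - y₁‖ * ‖z‖) (z : Z) :
    LipschitzOnWith (L * ‖z‖₊) (fun y => f y z) D :=
  .of_dist_le_mul fun y₁ hy₁ y₂ hy₂ => by
    simpa only [dist_eq_norm, NNReal.coe_mul, coe_nnnorm, mul_right_comm] using hf y₂ hy₂ y₁ hy₁ z

theorem norm_intervalIntegral_le_setIntegral_norm {E : Type*} [NormedAddCommGroup E]
    [NormedSpace ℝ E] {μ : Measure ℝ} {g : ℝ → E} {S : Set ℝ} {t₀ t : ℝ}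
    (hg : IntegrableOn g S μ) (hS : uIoc t₀ t ⊆ S) :
    ‖∫ s in t₀..t, g s ∂μ‖ ≤ ∫ s in S, ‖g s‖ ∂μ :=
  intervalIntegral.norm_integral_le_integral_norm_uIoc.trans <|
    setIntegral_mono_set hg.norm (.of_forall fun _ => norm_nonneg _) hS.eventuallyLE

theorem setIntegral_norm_sub_le_of_lipschitzOnWith {α X E : Type*} [MeasurableSpace α]
    [PseudoMetricSpace X] [NormedAddCommGroup E] {μ : Measure α} {S : Set α}
    (hS : MeasurableSet S) {F : α → X → E} {D : Set X} {K : α → NNReal}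
    (hF : ∀ s ∈ S, LipschitzOnWith (K s) (F s) D) (hK : IntegrableOn (fun s => (K s : ℝ)) S μ)
    {η ζ : α → X} (hη : MapsTo η S D) (hζ : MapsTo ζ S D)
    {M : ℝ} (hM : ∀ s ∈ S, dist (η s) (ζ s) ≤ M) :
    ∫ s in S, ‖F s (η s) - F s (ζ s)‖ ∂μ ≤ (∫ s in S, (K s : ℝ) ∂μ) * M := by
  have pointwise_le : ∀ s ∈ S, ‖F s (η s) - F s (ζ s)‖ ≤ K s * M := fun s hs =>
    calc ‖F s (η s) - F s (ζ s)‖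
        ≤ K s * dist (η s) (ζ s) := by
          simpa only [dist_eq_norm] using (hF s hs).dist_le_mul _ (hη hs) _ (hζ hs)
      _ ≤ K s * M := mul_le_mul_of_nonneg_left (hM s hs) (K s).coe_nonneg
  rw [← integral_mul_const]
  exact integral_mono_of_nonneg (.of_forall fun _ => norm_nonneg _) (hK.mul_const M)
    (ae_restrict_of_forall_mem hS pointwise_le)

theorem picard_contraction_general {E : Type*} [NormedAddCommGroup E] [NormedSpace ℝ E]
    [CompleteSpace E] {F : ℝ → E → E} {D : Set E} {K : ℝ → NNReal} {a b t₀ t : ℝ}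
    (hF : ∀ s ∈ Icc a b, LipschitzOnWith (K s) (F s) D)
    (hK : IntegrableOn (fun s => (K s : ℝ)) (Icc a b)) (y₀ : E) {η ζ : ℝ → E}
    (hη : MapsTo η (Icc a b) D) (hζ : MapsTo ζ (Icc a b) D)
    (hFη : IntegrableOn (fun s => F s (η s)) (Icc a b))
    (hFζ : IntegrableOn (fun s => F s (ζ s)) (Icc a b))
    {M : ℝ} (hM : ∀ s ∈ Icc a b, ‖η s - ζ s‖ ≤ M)
    (ht₀ : t₀ ∈ Icc a b) (ht : t ∈ Icc a b) :
    ‖ODE.picard F t₀ y₀ η t - ODE.picard F t₀ y₀ ζ t‖ ≤ (∫ s in Icc a b, (K s : ℝ)) * M := by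
  have hsub : uIcc t₀ t ⊆ Icc a b := uIcc_subset_Icc ht₀ ht
  calc ‖ODE.picard F t₀ y₀ η t - ODE.picard F t₀ y₀ ζ t‖
      = ‖∫ s in t₀..t, (F s (η s) - F s (ζ s))‖ := by
        rw [ODE.picard_apply, ODE.picard_apply, add_sub_add_left_eq_sub,
          intervalIntegral.integral_sub (hFη.mono_set hsub).intervalIntegrable
            (hFζ.mono_set hsub).intervalIntegrable]
    _ ≤ ∫ s in Icc a b, ‖F s (η s) - F s (ζ s)‖ :=
        norm_intervalIntegral_le_setIntegral_norm (hFη.sub hFζ) (uIoc_subset_uIcc.trans hsub)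
    _ ≤ (∫ s in Icc a b, (K s : ℝ)) * M :=
        setIntegral_norm_sub_le_of_lipschitzOnWith measurableSet_Icc hF hK hη hζ
          (by simpa only [dist_eq_norm] using hM)

/-- The Picard operator `Φ(η)(t) = y₀ + ∫_{t₀}^t f(η(s), γ(s)) ds` is a contraction
on `X = {η ∈ C([a,b],E) : η(t₀) = y₀, ‖η - y₀‖_∞ ≤ R}` with Lipschitz constant
`L ‖γ‖_{L¹}`: for `η, ζ ∈ X`, `‖Φ(η) - Φ(ζ)‖_∞ ≤ L ‖γ‖_{L¹} ‖η - ζ‖_∞`. -/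
theorem picard_contraction
    {E Z : Type*} [NormedAddCommGroup E] [NormedSpace ℝ E] [CompleteSpace E]
    [NormedAddCommGroup Z] [NormedSpace ℝ Z] [CompleteSpace Z]
    (y₀ : E) (R : ℝ) (hR : 0 < R) (f : E → Z → E)
    (hf : ContinuousOn (fun p : E × Z => f p.1 p.2) (Metric.closedBall y₀ R ×ˢ (univ : Set Z)))
    (hlin : ∀ y ∈ Metric.closedBall y₀ R, IsLinearMap ℝ (f y))
    (L : ℝ) (hL : 0 ≤ L)
    (hLip : ∀ y₁ ∈ Metric.closedBall y₀ R, ∀ y₂ ∈ Metric.closedBall y₀ R, ∀ z : Z,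
      ‖f y₂ z - f y₁ z‖ ≤ L * ‖y₂ - y₁‖ * ‖z‖)
    (a b : ℝ) (hab : a < b) (t₀ : ℝ) (ht₀ : t₀ ∈ Icc a b)
    (γ : ℝ → Z) (hγ : IntegrableOn γ (Icc a b))
    (η ζ : ℝ → E)
    (hηc : ContinuousOn η (Icc a b)) (hη₀ : η t₀ = y₀)
    (hηR : ∀ t ∈ Icc a b, ‖η t - y₀‖ ≤ R)
    (hζc : ContinuousOn ζ (Icc a b)) (hζ₀ : ζ t₀ = y₀)
    (hζR : ∀ t ∈ Icc a b, ‖ζ t - y₀‖ ≤ R)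
    (hintη : IntegrableOn (fun s => f (η s) (γ s)) (Icc a b))
    (hintζ : IntegrableOn (fun s => f (ζ s) (γ s)) (Icc a b)) :
    ∀ t ∈ Icc a b,
      ‖(y₀ + ∫ s in t₀..t, f (η s) (γ s)) - (y₀ + ∫ s in t₀..t, f (ζ s) (γ s))‖ ≤
        L * (∫ s in Icc a b, ‖γ s‖) * sSup ((fun s => ‖η s - ζ s‖) '' Icc a b) := by
  lift L to NNReal using hL
  intro t ht
  have norm_sub_le_sSup : ∀ s ∈ Icc a b,
      ‖η s - ζ s‖ ≤ sSup ((fun s => ‖η s - ζ s‖) '' Icc a b) := fun _ hs =>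
    (show ContinuousOn (fun s => ‖η s - ζ s‖) _ from (hηc.sub hζc).norm).le_sSup_image_Icc hs
  simpa only [ODE.picard_apply, NNReal.coe_mul, coe_nnnorm, integral_const_mul] using
    picard_contraction_general (fun s _ => lipschitzOnWith_of_norm_sub_le_mul_norm hLip (γ s))
      (hγ.norm.const_mul (L : ℝ)) y₀
      (fun s hs => mem_closedBall_iff_norm.2 (hηR s hs))
      (fun s hs => mem_closedBall_iff_norm.2 (hζR s hs)) hintη hintζ
      norm_sub_le_sSup ht₀ ht
end

section
/- Let E, Z be Banach spaces and f : E × Z → E a continuous map, linear in the second variable, satisfying a global Lipschitz estimate ‖f(y₂,z) − f(y₁,z)‖ ≤ L‖y₂ − y₁‖‖z‖ and ‖f(y,z)‖ ≤ (C + L‖y‖)‖z‖. Then for every γ ∈ L¹([0,1],Z) and y₀ ∈ E, the initial value problem y'(t) = f(y(t),γ(t)), y(0) = y₀ has a unique Carathéodory solution η : [0,1] → E, and η satisfies the Grönwall bound ‖η(t) − y₀‖ ≤ (C + L‖y₀‖)‖γ‖_{L¹} e^{L‖γ‖_{L¹}}. -/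
open Set MeasureTheory Real

/-- A Carathéodory solution of `y'(t) = f(y(t), γ(t))` on `[a,b]`, anchored at `t₀`. -/
def IsCaraSol {X Z : Type*} [NormedAddCommGroup X] [NormedSpace ℝ X]
    (f : X → Z → X) (γ : ℝ → Z) (a b t₀ : ℝ) (η : ℝ → X) : Prop :=
  ContinuousOn η (Icc a b) ∧
  IntegrableOn (fun s => f (η s) (γ s)) (Icc a b) ∧
  ∀ t ∈ Icc a b, η t = η t₀ + ∫ s in t₀..t, f (η s) (γ s)

/-!
In the sup norm weighted by `exp (-∫ₐᵗ 2k)`, where `k` is an integrable Lipschitz constant of the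
time-dependent field, the Picard operator is a `1/2`-contraction, because
`∫ₐᵗ 2k(s) exp (∫ₐˢ 2k) ds = exp (∫ₐᵗ 2k) - 1`. Uniqueness and the growth bound are both instances
of one stability estimate: the distance between a solution and a curve that solves another equation
is controlled by the integrated difference of the two fields along that curve. This is Grönwall's
inequality for an integrable coefficient `k`, which holds since `U exp (-∫ k)` is absolutely
continuous with nonpositive derivative whenever `U' ≤ k U` almost everywhere.
-/

open Filter
open scoped NNReal

lemma absolutelyContinuousOnInterval_comp_of_locallyLipschitz {X Y : Type*}
    [SeminormedAddCommGroup X] [PseudoMetricSpace Y] {φ : X → Y} {f : ℝ → X} {a b : ℝ}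
    (hφ : LocallyLipschitz φ) (hf : AbsolutelyContinuousOnInterval f a b) :
    AbsolutelyContinuousOnInterval (fun t => φ (f t)) a b := by
  have hcompact : IsCompact (f '' uIcc a b) := isCompact_uIcc.image_of_continuousOn hf.continuousOn
  obtain ⟨K, hK⟩ := hφ.locallyLipschitzOn.exists_lipschitzOnWith_of_compact hcompact
  refine squeeze_zero' (.of_forall fun _ => Finset.sum_nonneg fun _ _ => dist_nonneg) ?_
    (by simpa only [mul_zero] using Filter.Tendsto.const_mul (K : ℝ) hf)
  refine eventually_inf_principal.2 (.of_forall fun I hI => ?_)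
  rw [Finset.mul_sum]
  refine Finset.sum_le_sum fun i hi => hK.dist_le_mul _ ?_ _ ?_
  exacts [mem_image_of_mem f (hI.1 i hi).1, mem_image_of_mem f (hI.1 i hi).2]

section Gronwall

variable {k : ℝ → ℝ} {a b : ℝ}

lemma absolutelyContinuousOnInterval_exp_integral (hk : IntervalIntegrable k volume a b) :
    AbsolutelyContinuousOnInterval (fun t => exp (∫ s in a..t, k s)) a b :=
  absolutelyContinuousOnInterval_comp_of_locallyLipschitz contDiff_exp.locallyLipschitz
    (hk.absolutelyContinuousOnInterval_intervalIntegral left_mem_uIcc)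

lemma ae_hasDerivAt_exp_integral (hk : IntervalIntegrable k volume a b) :
    ∀ᵐ t, t ∈ uIoc a b →
      HasDerivAt (fun t => exp (∫ s in a..t, k s)) (k t * exp (∫ s in a..t, k s)) t := by
  filter_upwards [hk.ae_hasDerivAt_integral] with t hderiv ht
  simpa only [mul_comm] using (hderiv (uIoc_subset_uIcc ht) a left_mem_uIcc).exp

lemma integral_mul_exp_integral (hk : IntervalIntegrable k volume a b) :
    ∫ t in a..b, k t * exp (∫ s in a..t, k s) = exp (∫ s in a..b, k s) - 1 := by
  have hftc := (absolutelyContinuousOnInterval_exp_integral hk).integral_deriv_eq_sub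
  rw [intervalIntegral.integral_same, exp_zero] at hftc
  rw [← hftc]
  apply intervalIntegral.integral_congr_ae
  filter_upwards [ae_hasDerivAt_exp_integral hk] with t hderiv ht
  exact (hderiv ht).deriv.symm

theorem le_mul_exp_integral_of_deriv_le {U : ℝ → ℝ} (hab : a ≤ b)
    (hk : IntervalIntegrable k volume a b) (hU : AbsolutelyContinuousOnInterval U a b)
    (hderiv : ∀ᵐ t, t ∈ uIoc a b → deriv U t ≤ k t * U t) :
    U b ≤ U a * exp (∫ s in a..b, k s) := by
  have hk_neg : IntervalIntegrable (fun s => -k s) volume a b := hk.neg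
  let V : ℝ → ℝ := fun t => exp (∫ s in a..t, -k s)
  have hV : AbsolutelyContinuousOnInterval V a b :=
    absolutelyContinuousOnInterval_exp_integral hk_neg
  have hprod : ∫ t in a..b, deriv U t * V t + U t * deriv V t ≤ 0 := by
    rw [intervalIntegral.integral_of_le hab, ← uIoc_of_le hab]
    refine setIntegral_nonpos_ae measurableSet_uIoc ?_
    filter_upwards [hderiv, ae_hasDerivAt_exp_integral hk_neg] with t hUt hVt ht
    have : deriv U t * V t ≤ k t * U t * V t :=
      mul_le_mul_of_nonneg_right (hUt ht) (exp_pos _).le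
    rw [(hVt ht).deriv]
    linarith
  have hVa : V a = 1 := by simp only [V, intervalIntegral.integral_same, exp_zero]
  have hVb : V b = (exp (∫ s in a..b, k s))⁻¹ := by
    simp only [V, intervalIntegral.integral_neg, exp_neg]
  rw [hU.integral_deriv_mul_eq_sub hV, hVa, mul_one, sub_nonpos, hVb, ← div_eq_mul_inv] at hprod
  exact (div_le_iff₀ (exp_pos _)).1 hprod

theorem le_mul_exp_integral_of_le_add_integral {u : ℝ → ℝ} {A : ℝ} (hab : a ≤ b)
    (hk : IntervalIntegrable k volume a b) (hk₀ : ∀ t ∈ Icc a b, 0 ≤ k t)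
    (hku : IntervalIntegrable (fun t => k t * u t) volume a b)
    (hu : ∀ t ∈ Icc a b, u t ≤ A + ∫ s in a..t, k s * u s) :
    u b ≤ A * exp (∫ s in a..b, k s) := by
  let U : ℝ → ℝ := fun t => A + ∫ s in a..t, k s * u s
  have hU : AbsolutelyContinuousOnInterval U a b :=
    (LipschitzWith.const A).lipschitzOnWith.absolutelyContinuousOnInterval.fun_add
      (hku.absolutelyContinuousOnInterval_intervalIntegral left_mem_uIcc)
  have hderiv : ∀ᵐ t, t ∈ uIoc a b → deriv U t ≤ k t * U t := by
    filter_upwards [hku.ae_hasDerivAt_integral] with t hprim ht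
    have ht' : t ∈ Icc a b := Ioc_subset_Icc_self (uIoc_of_le hab ▸ ht)
    rw [((hprim (uIoc_subset_uIcc ht) a left_mem_uIcc).const_add A).deriv]
    exact mul_le_mul_of_nonneg_left (hu t ht') (hk₀ t ht')
  calc u b ≤ U b := hu b (right_mem_Icc.2 hab)
    _ ≤ U a * exp (∫ s in a..b, k s) := le_mul_exp_integral_of_deriv_le hab hk hU hderiv
    _ = A * exp (∫ s in a..b, k s) := by
      simp only [U, intervalIntegral.integral_same, add_zero]

end Gronwall

theorem exists_fixedPoint_of_weighted_contraction {X E : Type*} [TopologicalSpace X]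
    [CompactSpace X] [NormedAddCommGroup E] [NormedSpace ℝ E] [CompleteSpace E] {w : C(X, ℝ)}
    (hw : ∀ x, 0 < w x) {θ : ℝ≥0} (hθ : θ < 1) {T : C(X, E) → C(X, E)}
    (hT : ∀ g h : C(X, E), ∀ D : ℝ, (∀ x, ‖g x - h x‖ ≤ D * w x) →
      ∀ x, ‖T g x - T h x‖ ≤ θ * D * w x) :
    ∃ g, T g = g := by
  let v : C(X, ℝ) := ⟨fun x => (w x)⁻¹, w.continuous.inv₀ fun x => (hw x).ne'⟩
  have hv (x : X) : 0 < v x := inv_pos.2 (hw x)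
  have hwv (x : X) : w x * v x = 1 := mul_inv_cancel₀ (hw x).ne'
  have hcontr : ContractingWith θ fun g : C(X, E) => v • T (w • g) := by
    refine ⟨hθ, LipschitzWith.of_dist_le_mul fun g h => ?_⟩
    refine (ContinuousMap.dist_le (by positivity)).2 fun x => ?_
    have hweighted : ∀ y, ‖(w • g) y - (w • h) y‖ ≤ dist g h * w y := fun y => by
      rw [ContinuousMap.smul_apply', ContinuousMap.smul_apply', ← smul_sub, norm_smul,
        norm_of_nonneg (hw y).le, mul_comm, ← dist_eq_norm]
      gcongr
      exacts [(hw y).le, ContinuousMap.dist_apply_le_dist y]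
    calc dist ((v • T (w • g)) x) ((v • T (w • h)) x)
        = v x * ‖T (w • g) x - T (w • h) x‖ := by
          rw [dist_eq_norm, ContinuousMap.smul_apply', ContinuousMap.smul_apply', ← smul_sub,
            norm_smul, norm_of_nonneg (hv x).le]
      _ ≤ v x * (θ * dist g h * w x) := by
        gcongr
        exacts [(hv x).le, hT _ _ _ hweighted x]
      _ = θ * dist g h := by
        rw [mul_left_comm, mul_comm (v x), hwv, mul_one]
  refine ⟨w • hcontr.fixedPoint, ?_⟩
  have hwv_one : w * v = 1 := ContinuousMap.ext hwv
  have hfix := congrArg (w • ·) hcontr.fixedPoint_isFixedPt.eq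
  simpa only [smul_smul, hwv_one, one_smul] using hfix

theorem aestronglyMeasurable_comp_of_ae_continuous {α E G : Type*} [MeasurableSpace α]
    {μ : Measure α} [TopologicalSpace E] [TopologicalSpace G]
    [TopologicalSpace.PseudoMetrizableSpace G]
    {F : α → E → G} (hcont : ∀ᵐ x ∂μ, Continuous (F x))
    (hmeas : ∀ y, AEStronglyMeasurable (fun x => F x y) μ) {g : α → E}
    (hg : AEStronglyMeasurable g μ) : AEStronglyMeasurable (fun x => F x (g x)) μ := by
  obtain ⟨g', hg', hgg'⟩ := hg
  suffices AEStronglyMeasurable (fun x => F x (g' x)) μ from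
    this.congr (hgg'.mono fun x hx => by simp only [hx])
  have hsimple (s : SimpleFunc α E) : AEStronglyMeasurable (fun x => F x (s x)) μ := by
    have hcover : ⋃ y : s.range, s ⁻¹' {y.1} = univ :=
      eq_univ_of_forall fun x => mem_iUnion.2 ⟨⟨s x, s.mem_range_self x⟩, rfl⟩
    rw [← Measure.restrict_univ (μ := μ), ← hcover, aestronglyMeasurable_iUnion_iff]
    refine fun y => (hmeas y).restrict.congr ?_
    filter_upwards [ae_restrict_mem (s.measurableSet_preimage {y.1})] with x hx
    rw [← (hx : s x = y)]
  refine aestronglyMeasurable_of_tendsto_ae atTop (fun n => hsimple (hg'.approx n)) ?_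
  filter_upwards [hcont] with x hx
  exact (hx.tendsto _).comp (hg'.tendsto_approx x)

lemma intervalIntegrable_of_integrableOn_Icc {E : Type*} [NormedAddCommGroup E] {F : ℝ → E}
    {a b t : ℝ} (hF : IntegrableOn F (Icc a b)) (ht : t ∈ Icc a b) :
    IntervalIntegrable F volume a t :=
  (intervalIntegrable_iff_integrableOn_Icc_of_le ht.1).2 (hF.mono_set (Icc_subset_Icc_right ht.2))

lemma intervalIntegral_le_setIntegral_Icc {F : ℝ → ℝ} {a b t : ℝ} (hF : IntegrableOn F (Icc a b))
    (hF₀ : ∀ s, 0 ≤ F s) (ht : t ∈ Icc a b) : ∫ s in a..t, F s ≤ ∫ s in Icc a b, F s := by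
  rw [intervalIntegral.integral_of_le ht.1]
  exact setIntegral_mono_set hF (.of_forall hF₀)
    (Ioc_subset_Icc_self.trans (Icc_subset_Icc_right ht.2)).eventuallyLE

lemma IsCaraSol.sub_eq {E Z W : Type*} [NormedAddCommGroup E] [NormedSpace ℝ E] {f : E → Z → E}
    {g : E → W → E} {γ : ℝ → Z} {δ : ℝ → W} {η₁ η₂ : ℝ → E} {a b t : ℝ}
    (h₁ : IsCaraSol f γ a b a η₁) (h₂ : IsCaraSol g δ a b a η₂) (ht : t ∈ Icc a b) :
    η₁ t - η₂ t = (η₁ a - η₂ a) + ∫ s in a..t, (f (η₁ s) (γ s) - g (η₂ s) (δ s)) := by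
  rw [intervalIntegral.integral_sub (intervalIntegrable_of_integrableOn_Icc h₁.2.1 ht)
    (intervalIntegrable_of_integrableOn_Icc h₂.2.1 ht), h₁.2.2 t ht, h₂.2.2 t ht]
  abel

section Caratheodory

variable {E Z : Type*} [NormedAddCommGroup E] {f : E → Z → E} {γ : ℝ → Z} {k : ℝ → ℝ≥0}
  {a b t : ℝ}

/-- The Carathéodory–Lipschitz conditions on `[a, b]` for the time-dependent vector field
`(t, y) ↦ f y (γ t)`: it is integrable in `t` for every fixed `y`, and Lipschitz in `y` with a
constant `k t` that is integrable in `t`. -/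
structure IsCaraLipschitz (f : E → Z → E) (γ : ℝ → Z) (k : ℝ → ℝ≥0) (a b : ℝ) : Prop where
  integrableOn_const : IntegrableOn (fun t => (k t : ℝ)) (Icc a b)
  lipschitzWith : ∀ t ∈ Icc a b, LipschitzWith (k t) fun y => f y (γ t)
  integrableOn_field : ∀ y, IntegrableOn (fun t => f y (γ t)) (Icc a b)

namespace IsCaraLipschitz

lemma norm_sub_le (h : IsCaraLipschitz f γ k a b) (ht : t ∈ Icc a b) (y z : E) :
    ‖f y (γ t) - f z (γ t)‖ ≤ k t * ‖y - z‖ := by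
  simpa only [dist_eq_norm] using (h.lipschitzWith t ht).dist_le_mul y z

lemma integrableOn_comp (h : IsCaraLipschitz f γ k a b) {η : ℝ → E}
    (hη : ContinuousOn η (Icc a b)) : IntegrableOn (fun t => f (η t) (γ t)) (Icc a b) := by
  have hmeas : AEStronglyMeasurable (fun t => f (η t) (γ t)) (volume.restrict (Icc a b)) :=
    aestronglyMeasurable_comp_of_ae_continuous (F := fun t y => f y (γ t))
      (ae_restrict_of_forall_mem measurableSet_Icc fun t ht => (h.lipschitzWith t ht).continuous)
      (fun y => (h.integrableOn_field y).aestronglyMeasurable)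
      (hη.aestronglyMeasurable measurableSet_Icc)
  have hdom : IntegrableOn (fun t => k t * ‖η t - 0‖ + ‖f 0 (γ t)‖) (Icc a b) :=
    (h.integrableOn_const.mul_continuousOn (hη.sub continuousOn_const).norm isCompact_Icc).add
      (h.integrableOn_field 0).norm
  refine hdom.mono' hmeas (ae_restrict_of_forall_mem measurableSet_Icc fun t ht => ?_)
  calc ‖f (η t) (γ t)‖ ≤ ‖f (η t) (γ t) - f 0 (γ t)‖ + ‖f 0 (γ t)‖ := norm_le_norm_sub_add _ _
    _ ≤ k t * ‖η t - 0‖ + ‖f 0 (γ t)‖ := by gcongr; exact h.norm_sub_le ht _ _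

variable [NormedSpace ℝ E]

lemma norm_sub_le_add_integral {W : Type*} {g : E → W → E} {δ : ℝ → W} {η₁ η₂ : ℝ → E}
    (h : IsCaraLipschitz f γ k a b) (h₁ : IsCaraSol f γ a b a η₁) (h₂ : IsCaraSol g δ a b a η₂)
    (ht : t ∈ Icc a b) :
    ‖η₁ t - η₂ t‖ ≤
      (‖η₁ a - η₂ a‖ + ∫ s in Icc a b, ‖f (η₂ s) (γ s) - g (η₂ s) (δ s)‖) +
        ∫ s in a..t, k s * ‖η₁ s - η₂ s‖ := by
  have hku : IntervalIntegrable (fun s => k s * ‖η₁ s - η₂ s‖) volume a t :=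
    intervalIntegrable_of_integrableOn_Icc
      (h.integrableOn_const.mul_continuousOn (h₁.1.sub h₂.1).norm isCompact_Icc) ht
  have hdefect : IntegrableOn (fun s => ‖f (η₂ s) (γ s) - g (η₂ s) (δ s)‖) (Icc a b) :=
    ((h.integrableOn_comp h₂.1).sub h₂.2.1).norm
  have hdefect_t := intervalIntegrable_of_integrableOn_Icc hdefect ht
  have hspeed (s : ℝ) (hs : s ∈ Ioc a t) : ‖f (η₁ s) (γ s) - g (η₂ s) (δ s)‖ ≤
      ‖f (η₂ s) (γ s) - g (η₂ s) (δ s)‖ + k s * ‖η₁ s - η₂ s‖ := by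
    rw [← sub_add_sub_cancel _ (f (η₂ s) (γ s)), add_comm]
    refine (norm_add_le _ _).trans ?_
    gcongr
    exact h.norm_sub_le ⟨hs.1.le, hs.2.trans ht.2⟩ _ _
  calc ‖η₁ t - η₂ t‖
      ≤ ‖η₁ a - η₂ a‖ + ‖∫ s in a..t, (f (η₁ s) (γ s) - g (η₂ s) (δ s))‖ := by
        rw [h₁.sub_eq h₂ ht]
        exact norm_add_le _ _
    _ ≤ ‖η₁ a - η₂ a‖ + ∫ s in a..t,
          (‖f (η₂ s) (γ s) - g (η₂ s) (δ s)‖ + k s * ‖η₁ s - η₂ s‖) := by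
        gcongr
        exact intervalIntegral.norm_integral_le_of_norm_le ht.1 (.of_forall hspeed)
          (hdefect_t.add hku)
    _ ≤ _ := by
        rw [intervalIntegral.integral_add hdefect_t hku, ← add_assoc]
        gcongr
        exact intervalIntegral_le_setIntegral_Icc hdefect (fun _ => norm_nonneg _) ht

theorem norm_sub_le_of_isCaraSol {W : Type*} {g : E → W → E} {δ : ℝ → W} {η₁ η₂ : ℝ → E}
    (h : IsCaraLipschitz f γ k a b) (h₁ : IsCaraSol f γ a b a η₁) (h₂ : IsCaraSol g δ a b a η₂)
    (ht : t ∈ Icc a b) :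
    ‖η₁ t - η₂ t‖ ≤
      (‖η₁ a - η₂ a‖ + ∫ s in Icc a b, ‖f (η₂ s) (γ s) - g (η₂ s) (δ s)‖) *
        exp (∫ s in Icc a b, (k s : ℝ)) := by
  have hku : IntegrableOn (fun s => k s * ‖η₁ s - η₂ s‖) (Icc a b) :=
    h.integrableOn_const.mul_continuousOn (h₁.1.sub h₂.1).norm isCompact_Icc
  calc ‖η₁ t - η₂ t‖
      ≤ (‖η₁ a - η₂ a‖ + ∫ s in Icc a b, ‖f (η₂ s) (γ s) - g (η₂ s) (δ s)‖) *
          exp (∫ s in a..t, (k s : ℝ)) :=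
        le_mul_exp_integral_of_le_add_integral ht.1
          (intervalIntegrable_of_integrableOn_Icc h.integrableOn_const ht)
          (fun s _ => (k s).coe_nonneg) (intervalIntegrable_of_integrableOn_Icc hku ht)
          fun s hs => h.norm_sub_le_add_integral h₁ h₂ (Icc_subset_Icc_right ht.2 hs)
    _ ≤ _ := by
        gcongr
        exact intervalIntegral_le_setIntegral_Icc h.integrableOn_const
          (fun s => (k s).coe_nonneg) ht

theorem eqOn_of_isCaraSol {η₁ η₂ : ℝ → E} (h : IsCaraLipschitz f γ k a b)
    (h₁ : IsCaraSol f γ a b a η₁) (h₂ : IsCaraSol f γ a b a η₂) (ha : η₁ a = η₂ a) :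
    EqOn η₁ η₂ (Icc a b) := fun t ht => by
  simpa [ha, sub_eq_zero] using h.norm_sub_le_of_isCaraSol h₁ h₂ ht

theorem norm_sub_initial_le {η : ℝ → E} (h : IsCaraLipschitz f γ k a b)
    (hη : IsCaraSol f γ a b a η) (ht : t ∈ Icc a b) :
    ‖η t - η a‖ ≤ (∫ s in Icc a b, ‖f (η a) (γ s)‖) * exp (∫ s in Icc a b, (k s : ℝ)) := by
  -- The constant curve solves the equation of the zero field.
  have hconst : IsCaraSol (fun (_ : E) (_ : Z) => (0 : E)) γ a b a fun _ => η a :=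
    ⟨continuousOn_const, integrableOn_zero, by simp⟩
  simpa using h.norm_sub_le_of_isCaraSol hη hconst ht

/-- The Picard operator `g ↦ y₀ + ∫ₐᵗ f(g(s), γ(s)) ds` on continuous curves over `[a, b]`; curves
are extended constantly outside `[a, b]`, so that they may be composed with the time variable of
the integral. -/
noncomputable def picardMap (h : IsCaraLipschitz f γ k a b) (hab : a ≤ b) (y₀ : E)
    (g : C(Icc a b, E)) : C(Icc a b, E) where
  toFun t := y₀ + ∫ s in a..t, f (IccExtend hab g s) (γ s)
  continuous_toFun := by
    have hcont : Continuous (IccExtend hab g) := continuous_IccExtend_iff.2 g.continuous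
    have hint := intervalIntegrable_of_integrableOn_Icc
      (h.integrableOn_comp hcont.continuousOn) (right_mem_Icc.2 hab)
    have hprim := intervalIntegral.continuousOn_primitive_interval' hint left_mem_uIcc
    exact continuous_const.add (hprim.mono Icc_subset_uIcc).domRestrict

lemma picardMap_sub_le (h : IsCaraLipschitz f γ k a b) (hab : a ≤ b) (y₀ : E)
    {g₁ g₂ : C(Icc a b, E)} {D : ℝ}
    (hg : ∀ t : Icc a b, ‖g₁ t - g₂ t‖ ≤ D * exp (∫ s in a..t, 2 * (k s : ℝ))) (t : Icc a b) :
    ‖h.picardMap hab y₀ g₁ t - h.picardMap hab y₀ g₂ t‖ ≤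
      2⁻¹ * D * exp (∫ s in a..t, 2 * (k s : ℝ)) := by
  have hD : 0 ≤ D := nonneg_of_mul_nonneg_left ((norm_nonneg _).trans (hg t)) (exp_pos _)
  have hint (g : C(Icc a b, E)) : IntervalIntegrable (fun s => f (IccExtend hab g s) (γ s))
      volume a t := intervalIntegrable_of_integrableOn_Icc
    (h.integrableOn_comp (continuous_IccExtend_iff.2 g.continuous).continuousOn) t.2
  have hk : IntervalIntegrable (fun s => 2 * (k s : ℝ)) volume a t :=
    (intervalIntegrable_of_integrableOn_Icc h.integrableOn_const t.2).const_mul 2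
  have hspeed (s : ℝ) (hs : s ∈ Ioc a t.1) :
      ‖f (IccExtend hab g₁ s) (γ s) - f (IccExtend hab g₂ s) (γ s)‖ ≤
        2⁻¹ * D * (2 * (k s : ℝ) * exp (∫ r in a..s, 2 * (k r : ℝ))) := by
    have hs' : s ∈ Icc a b := ⟨hs.1.le, hs.2.trans t.2.2⟩
    calc _ ≤ k s * ‖IccExtend hab g₁ s - IccExtend hab g₂ s‖ := h.norm_sub_le hs' _ _
      _ ≤ k s * (D * exp (∫ r in a..s, 2 * (k r : ℝ))) := by
        rw [IccExtend_of_mem _ _ hs', IccExtend_of_mem _ _ hs']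
        gcongr
        exact hg ⟨s, hs'⟩
      _ = _ := by ring
  calc ‖h.picardMap hab y₀ g₁ t - h.picardMap hab y₀ g₂ t‖
      = ‖∫ s in a..t, (f (IccExtend hab g₁ s) (γ s) - f (IccExtend hab g₂ s) (γ s))‖ := by
        rw [intervalIntegral.integral_sub (hint g₁) (hint g₂)]
        exact congrArg norm (add_sub_add_left_eq_sub _ _ _)
    _ ≤ ∫ s in a..t, 2⁻¹ * D * (2 * (k s : ℝ) * exp (∫ r in a..s, 2 * (k r : ℝ))) :=
        intervalIntegral.norm_integral_le_of_norm_le t.2.1 (.of_forall hspeed)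
          ((hk.mul_continuousOn
            (absolutelyContinuousOnInterval_exp_integral hk).continuousOn).const_mul _)
    _ = 2⁻¹ * D * (exp (∫ s in a..t, 2 * (k s : ℝ)) - 1) := by
        rw [intervalIntegral.integral_const_mul, integral_mul_exp_integral hk]
    _ ≤ 2⁻¹ * D * exp (∫ s in a..t, 2 * (k s : ℝ)) := by
        gcongr
        exact sub_le_self _ zero_le_one

theorem exists_isCaraSol [CompleteSpace E] (h : IsCaraLipschitz f γ k a b) (hab : a ≤ b) (y₀ : E) :
    ∃ η : ℝ → E, IsCaraSol f γ a b a η ∧ η a = y₀ := by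
  have hw : ContinuousOn (fun t => exp (∫ s in a..t, 2 * (k s : ℝ))) (Icc a b) := by
    have hk := intervalIntegrable_of_integrableOn_Icc h.integrableOn_const (right_mem_Icc.2 hab)
    simpa only [uIcc_of_le hab] using
      (absolutelyContinuousOnInterval_exp_integral (hk.const_mul 2)).continuousOn
  let w : C(Icc a b, ℝ) := ⟨fun t => exp (∫ s in a..t, 2 * (k s : ℝ)), hw.domRestrict⟩
  obtain ⟨g, hg⟩ : ∃ g, h.picardMap hab y₀ g = g :=
    exists_fixedPoint_of_weighted_contraction (w := w) (θ := 2⁻¹) (fun _ => exp_pos _)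
      two_inv_lt_one fun g₁ g₂ D hD t => by
        rw [NNReal.coe_inv, NNReal.coe_ofNat]
        exact h.picardMap_sub_le hab y₀ hD t
  let η : ℝ → E := IccExtend hab g
  have hη : Continuous η := continuous_IccExtend_iff.2 g.continuous
  have hη_eq (t : ℝ) (ht : t ∈ Icc a b) : η t = y₀ + ∫ s in a..t, f (η s) (γ s) :=
    (IccExtend_of_mem hab g ht).trans (DFunLike.congr_fun hg ⟨t, ht⟩).symm
  have hη_a : η a = y₀ := by
    rw [hη_eq a (left_mem_Icc.2 hab), intervalIntegral.integral_same, add_zero]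
  exact ⟨η, ⟨hη.continuousOn, h.integrableOn_comp hη.continuousOn, hη_a ▸ hη_eq⟩, hη_a⟩

end IsCaraLipschitz

lemma isCaraLipschitz_of_norm_sub_le [NormedAddCommGroup Z] (hf : ∀ y, Continuous (f y)) {L : ℝ≥0}
    (hLip : ∀ y₁ y₂ z, ‖f y₂ z - f y₁ z‖ ≤ L * ‖y₂ - y₁‖ * ‖z‖) {y₀ : E} {M : ℝ}
    (hM : ∀ z, ‖f y₀ z‖ ≤ M * ‖z‖) (hγ : IntegrableOn γ (Icc a b)) :
    IsCaraLipschitz f γ (fun t => L * ‖γ t‖₊) a b where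
  integrableOn_const := hγ.norm.const_mul (L : ℝ)
  lipschitzWith t _ := LipschitzWith.of_dist_le_mul fun y z => by
    simpa only [dist_eq_norm, NNReal.coe_mul, coe_nnnorm, mul_right_comm] using hLip z y (γ t)
  integrableOn_field y := by
    refine (hγ.norm.const_mul (L * ‖y - y₀‖ + M)).mono'
      ((hf y).comp_aestronglyMeasurable hγ.aestronglyMeasurable) (.of_forall fun t => ?_)
    calc ‖f y (γ t)‖ ≤ ‖f y (γ t) - f y₀ (γ t)‖ + ‖f y₀ (γ t)‖ := norm_le_norm_sub_add _ _
      _ ≤ L * ‖y - y₀‖ * ‖γ t‖ + M * ‖γ t‖ := add_le_add (hLip _ _ _) (hM _)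
      _ = (L * ‖y - y₀‖ + M) * ‖γ t‖ := by ring

end Caratheodory

theorem global_caratheodory_gronwall_general {E Z : Type*} [NormedAddCommGroup E] [NormedSpace ℝ E]
    [CompleteSpace E] [NormedAddCommGroup Z] {f : E → Z → E} (hf : ∀ y, Continuous (f y)) {L : ℝ}
    (hL : 0 ≤ L) (hLip : ∀ y₁ y₂ z, ‖f y₂ z - f y₁ z‖ ≤ L * ‖y₂ - y₁‖ * ‖z‖) {y₀ : E} {M : ℝ}
    (hM : ∀ z, ‖f y₀ z‖ ≤ M * ‖z‖) {a b : ℝ} (hab : a ≤ b) {γ : ℝ → Z}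
    (hγ : IntegrableOn γ (Icc a b)) :
    (∃ η : ℝ → E, IsCaraSol f γ a b a η ∧ η a = y₀ ∧
        ∀ t ∈ Icc a b, ‖η t - y₀‖ ≤
          M * (∫ s in Icc a b, ‖γ s‖) * exp (L * ∫ s in Icc a b, ‖γ s‖)) ∧
      ∀ η₁ η₂ : ℝ → E, IsCaraSol f γ a b a η₁ → IsCaraSol f γ a b a η₂ →
        η₁ a = y₀ → η₂ a = y₀ → EqOn η₁ η₂ (Icc a b) := by
  lift L to ℝ≥0 using hL
  have h := isCaraLipschitz_of_norm_sub_le hf hLip hM hγ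
  refine ⟨?_, fun η₁ η₂ h₁ h₂ h₁a h₂a => h.eqOn_of_isCaraSol h₁ h₂ (h₁a.trans h₂a.symm)⟩
  obtain ⟨η, hη, hηa⟩ := h.exists_isCaraSol hab y₀
  refine ⟨η, hη, hηa, fun t ht => ?_⟩
  have hspeed : ∫ s in Icc a b, ‖f y₀ (γ s)‖ ≤ M * ∫ s in Icc a b, ‖γ s‖ := by
    rw [← integral_const_mul]
    exact integral_mono (h.integrableOn_field y₀).norm (hγ.norm.const_mul M) fun s => hM (γ s)
  calc ‖η t - y₀‖ ≤ (∫ s in Icc a b, ‖f y₀ (γ s)‖) * exp (L * ∫ s in Icc a b, ‖γ s‖) := by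
        simpa [hηa, integral_const_mul] using h.norm_sub_initial_le hη ht
    _ ≤ M * (∫ s in Icc a b, ‖γ s‖) * exp (L * ∫ s in Icc a b, ‖γ s‖) := by gcongr

/-- Global existence, uniqueness and Grönwall estimate for `y' = f(y, γ(t))`,
`y(0) = y₀`, when `f` is globally Lipschitz in `y` (uniformly bilinearly in `z`)
and of linear growth. -/
theorem global_caratheodory_gronwall
    {E Z : Type*} [NormedAddCommGroup E] [NormedSpace ℝ E] [CompleteSpace E]
    [NormedAddCommGroup Z] [NormedSpace ℝ Z] [CompleteSpace Z]
    (f : E → Z → E) (hf : Continuous (fun p : E × Z => f p.1 p.2))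
    (hlin : ∀ y : E, IsLinearMap ℝ (f y))
    (L C : ℝ) (hL : 0 ≤ L) (hC : 0 ≤ C)
    (hLip : ∀ y₁ y₂ : E, ∀ z : Z, ‖f y₂ z - f y₁ z‖ ≤ L * ‖y₂ - y₁‖ * ‖z‖)
    (hgrowth : ∀ y : E, ∀ z : Z, ‖f y z‖ ≤ (C + L * ‖y‖) * ‖z‖)
    (γ : ℝ → Z) (hγ : IntegrableOn γ (Icc (0:ℝ) 1)) (y₀ : E) :
    (∃ η : ℝ → E, IsCaraSol f γ 0 1 0 η ∧ η 0 = y₀ ∧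
        ∀ t ∈ Icc (0:ℝ) 1, ‖η t - y₀‖ ≤
          (C + L * ‖y₀‖) * (∫ s in Icc (0:ℝ) 1, ‖γ s‖) *
            exp (L * ∫ s in Icc (0:ℝ) 1, ‖γ s‖)) ∧
      ∀ η₁ η₂ : ℝ → E, IsCaraSol f γ 0 1 0 η₁ → IsCaraSol f γ 0 1 0 η₂ →
        η₁ 0 = y₀ → η₂ 0 = y₀ → EqOn η₁ η₂ (Icc (0:ℝ) 1) :=
  global_caratheodory_gronwall_general (f := f)
    (fun y => hf.comp (Continuous.prodMk_right y)) hL hLip (hgrowth y₀)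
    zero_le_one hγ
end
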